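/- The sequence of real numbers {r_n} satisfies the difference equation n(n+1)^5 b0(n−1) r_{n+1} − 2n b1(n) r_n − b2(n) r_{n−1} + 2(n−1)^5 (2n−1) b0(n) r_{n−2} = 0 for every integer n ≥ 2. -/

import Mathlib

noncomputable section

open Filter


def a0r (x : ℝ) : ℝ := 41218*x^3 - 48459*x^2 + 20010*x - 2871

def a1r (x : ℝ) : ℝ := 2*(48802112*x^9 + 89030880*x^8 + 36002654*x^7 - 24317344*x^6
  - 19538418*x^5 + 1311365*x^4 + 3790503*x^3 + 460056*x^2 - 271701*x - 60291)

def a2r (x : ℝ) : ℝ := 3874492*x^8 - 2617900*x^7 - 3144314*x^6 + 2947148*x^5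
  + 647130*x^4 - 1182926*x^3 + 115771*x^2 + 170716*x - 44541

def b0r (x : ℝ) : ℝ := -a0r (-x)
def b1r (x : ℝ) : ℝ := a2r (-x)
def b2r (x : ℝ) : ℝ := -a1r (-x)

/-- The very-well-poised hypergeometric series `r_n`
(the summation index `k ≥ 1` is written as `k + 1` with `k : ℕ`). -/
def rr (n : ℕ) : ℝ := (Nat.factorial n : ℝ)^4 * ∑' k : ℕ,
  (((k : ℝ) + 1) + (n : ℝ)/2)
    * (∏ j ∈ Finset.Icc 1 n, (((k : ℝ) + 1) - (j : ℝ)))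
    * (∏ j ∈ Finset.Icc 1 n, (((k : ℝ) + 1) + (n : ℝ) + (j : ℝ)))
    / (∏ j ∈ Finset.range (n+1), (((k : ℝ) + 1) + (j : ℝ))^6)

def cf0 (y : ℝ) : ℝ := -972528*y^7 + 4479862*y^8 - 2595638*y^9 - 41929076*y^10 + 141816728*y^11 + 22000300*y^12 - 851208884*y^13 + 1074388260*y^14 + 1406303720*y^15 - 4593182770*y^16 + 4370622546*y^17 - 1793682592*y^18 + 263960072*y^19

def cf1 (y : ℝ) : ℝ := -5026056*y^6 + 38420712*y^7 - 47888682*y^8 - 355281190*y^9 + 1195522450*y^10 + 213659916*y^11 - 6492425306*y^12 + 8490379928*y^13 + 9084878200*y^14 - 35134867342*y^15 + 38348360370*y^16 - 18871676896*y^17 + 3545572360*y^18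

def cf2 (y : ℝ) : ℝ := -15315720*y^5 + 125353368*y^6 - 193283730*y^7 - 1093101748*y^8 + 4163704902*y^9 - 257740656*y^10 - 21259395188*y^11 + 32546082752*y^12 + 23561756176*y^13 - 122008447632*y^14 + 148562768236*y^15 - 81224199712*y^16 + 17091950496*y^17

def cf3 (y : ℝ) : ℝ := -25724160*y^4 + 228192356*y^5 - 448623280*y^6 - 1785122170*y^7 + 8391635935*y^8 - 3353264578*y^9 - 39798221176*y^10 + 74000415398*y^11 + 29101558341*y^12 - 247303830154*y^13 + 333554872168*y^14 - 197628038176*y^15 + 44991260592*y^16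

def cf4 (y : ℝ) : ℝ := -25724160*y^3 + 258021120*y^4 - 654057558*y^5 - 1671633908*y^6 + 10678767317*y^7 - 8557953597*y^8 - 46045234480*y^9 + 107470748984*y^10 + 8469491739*y^11 - 318280843383*y^12 + 480684220838*y^13 - 307634883144*y^14 + 75155417352*y^15

def cf5 (y : ℝ) : ℝ := -15434496*y^2 + 184958172*y^3 - 612476172*y^4 - 808591574*y^5 + 8752693194*y^6 - 11414219721*y^7 - 32812520434*y^8 + 102757697616*y^9 - 25325792715*y^10 - 266482559161*y^11 + 464324099493*y^12 - 323856139038*y^13 + 85186394704*y^14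

def cf6 (y : ℝ) : ℝ := -5144832*y + 81749724*y^2 - 365409744*y^3 - 56816704*y^4 + 4516116122*y^5 - 9059978214*y^6 - 13045342036*y^7 + 64353522396*y^8 - 39834312179*y^9 - 142089393337*y^10 + 303160699617*y^11 - 234901301235*y^12 + 67257512718*y^13

def cf7 (y : ℝ) : ℝ := -734976 + 20291532*y - 131816832*y^2 + 140203028*y^3 + 1346429018*y^4 - 4269031814*y^5 - 1672439828*y^6 + 25041746066*y^7 - 27726329609*y^8 - 43733074433*y^9 + 130096991467*y^10 - 115791367391*y^11 + 36798729694*y^12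

def cf8 (y : ℝ) : ℝ := 2153250 - 25157790*y + 63706884*y^2 + 182354760*y^3 - 1064821952*y^4 + 619903452*y^5 + 5143380186*y^6 - 9901256159*y^7 - 5105457335*y^8 + 33186200349*y^9 - 36242650415*y^10 + 13265065286*y^11

def cf9 (y : ℝ) : ℝ := -1751310 + 7799028*y + 6512568*y^2 - 83758458*y^3 + 144594064*y^4 + 239428104*y^5 - 1232329264*y^6 + 668271249*y^7 + 3192170272*y^8 - 5460771743*y^9 + 2586718026*y^10

def cf10 (y : ℝ) : ℝ := -430650 + 4563585*y + 7530897*y^2 - 57894633*y^3 - 32575099*y^4 + 285956162*y^5 - 41164310*y^6 - 614827732*y^7 + 552396952*y^8 - 83095488*y^9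

def cf11 (y : ℝ) : ℝ := 1317789 - 2262087*y - 19479576*y^2 + 29343875*y^3 + 97280081*y^4 - 169089450*y^5 - 166726166*y^6 + 446886670*y^7 - 214910652*y^8

def cf12 (y : ℝ) : ℝ := -723492 - 400113*y + 8910279*y^2 + 1730337*y^3 - 43711647*y^4 + 8905106*y^5 + 92382906*y^6 - 68669188*y^7

def cf13 (y : ℝ) : ℝ := 200970 + 415947*y - 1843443*y^2 - 3274775*y^3 + 7175399*y^4 + 8445234*y^5 - 12695144*y^6

def cf14 (y : ℝ) : ℝ := -34452 - 119538*y + 155556*y^2 + 820302*y^3 - 13368*y^4 - 1483848*y^5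

def cf15 (y : ℝ) : ℝ := 2871 + 14268*y + 8439*y^2 - 55700*y^3 - 82436*y^4

/-- The polynomial part of the certificate. -/
def PP (y t : ℝ) : ℝ := cf0 y + t*(cf1 y + t*(cf2 y + t*(cf3 y + t*(cf4 y + t*(cf5 y + t*(cf6 y + t*(cf7 y + t*(cf8 y + t*(cf9 y + t*(cf10 y + t*(cf11 y + t*(cf12 y + t*(cf13 y + t*(cf14 y + t*(cf15 y)))))))))))))))

def GG (s : ℝ) (m : ℕ) : ℝ := ∏ i ∈ Finset.range m, (s + (i : ℝ))

def AA (m : ℕ) (t : ℝ) : ℝ := ∏ j ∈ Finset.Icc 1 m, (t - (j : ℝ))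
def BB (m : ℕ) (t : ℝ) : ℝ := ∏ j ∈ Finset.Icc 1 m, (t + (m : ℝ) + (j : ℝ))
def DD (m : ℕ) (t : ℝ) : ℝ := ∏ j ∈ Finset.range (m+1), (t + (j : ℝ))^6
def RR (m : ℕ) (t : ℝ) : ℝ := (t + (m : ℝ)/2) * AA m t * BB m t / DD m t

lemma rr_eq (n : ℕ) : rr n = (Nat.factorial n : ℝ)^4 * ∑' k : ℕ, RR n ((k : ℝ) + 1) := rfl

lemma GG_succ (s : ℝ) (m : ℕ) : GG s (m+1) = GG s m * (s + m) := by
  simp [GG, Finset.prod_range_succ]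

lemma GG_shift (s : ℝ) (m : ℕ) : s * GG (s+1) m = GG s (m+1) := by
  unfold GG
  rw [Finset.prod_range_succ', mul_comm]
  congr 1
  · apply Finset.prod_congr rfl
    intro i _
    push_cast
    ring
  · simp

lemma GG_pos (s : ℝ) (hs : 0 < s) (m : ℕ) : 0 < GG s m := by
  unfold GG
  apply Finset.prod_pos
  intro i _
  positivity

lemma icc_prod (f : ℕ → ℝ) (m : ℕ) :
    ∏ j ∈ Finset.Icc 1 m, f j = ∏ i ∈ Finset.range m, f (i+1) := by
  induction m with
  | zero => simp
  | succ k ih => rw [Finset.prod_Icc_succ_top (by omega), ih, Finset.prod_range_succ]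

lemma BB_eq (m : ℕ) (t : ℝ) : BB m t = GG (t + m + 1) m := by
  unfold BB GG
  rw [icc_prod]
  apply Finset.prod_congr rfl
  intro i _
  push_cast
  ring

lemma DD_eq (m : ℕ) (t : ℝ) : DD m t = GG t (m+1) ^ 6 := by
  unfold DD GG
  rw [Finset.prod_pow]

lemma AA_succ (m : ℕ) (t : ℝ) : AA (m+1) t = AA m t * (t - (m + 1)) := by
  unfold AA
  rw [Finset.prod_Icc_succ_top (by omega)]
  push_cast
  ring

lemma AA_shift (m : ℕ) (t : ℝ) : AA m (t+1) * (t - m) = t * AA m t := by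
  have h1 := AA_succ m (t+1)
  have h2 : AA (m+1) (t+1) = t * AA m t := by
    unfold AA
    rw [icc_prod, icc_prod, Finset.prod_range_succ', mul_comm]
    congr 1
    · push_cast
      ring
    · apply Finset.prod_congr rfl
      intro i _
      push_cast
      ring
  rw [← h2, h1]
  ring

lemma BB_succ (m : ℕ) (t : ℝ) (ht : 0 < t) :
    BB (m+1) t = BB m t * (t + 2*m + 1) * (t + 2*m + 2) / (t + m + 1) := by
  have h := GG_shift (t + m + 1) (m+1)
  rw [GG_succ, GG_succ] at h
  have hp : t + m + 1 ≠ 0 := by positivity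
  rw [eq_div_iff hp, BB_eq, BB_eq]
  push_cast at h ⊢
  have e : t + ((m:ℝ) + 1) + 1 = t + m + 1 + 1 := by ring
  rw [e, GG_succ]
  linear_combination h + (t + m + 1 + (m + 1)) * GG_succ (t + m + 1) m

lemma BB_shift (m : ℕ) (t : ℝ) (ht : 0 < t) :
    BB m (t+1) = BB m t * (t + 2*m + 1) / (t + m + 1) := by
  have h := GG_shift (t + m + 1) m
  rw [GG_succ] at h
  have hp : t + m + 1 ≠ 0 := by positivity
  rw [eq_div_iff hp, BB_eq, BB_eq]
  have e : t + 1 + (m:ℝ) + 1 = t + m + 1 + 1 := by ring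
  rw [e]
  linear_combination h

lemma DD_succ (m : ℕ) (t : ℝ) : DD (m+1) t = DD m t * (t + m + 1)^6 := by
  rw [DD_eq, DD_eq, GG_succ]
  push_cast
  ring

lemma DD_shift (m : ℕ) (t : ℝ) (ht : 0 < t) :
    DD m (t+1) = DD m t * (t + m + 1)^6 / t^6 := by
  have h := GG_shift t (m+1)
  rw [GG_succ t (m+1)] at h
  rw [eq_div_iff (by positivity), DD_eq, DD_eq, ← mul_pow, ← mul_pow, mul_comm _ t, h]
  push_cast
  ring

lemma DD_pos (m : ℕ) (t : ℝ) (ht : 0 < t) : 0 < DD m t := by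
  rw [DD_eq]
  have := GG_pos t ht (m+1)
  positivity

/-- The certificate. -/
def SS (m : ℕ) (t : ℝ) : ℝ :=
  (t - (m+1)) * AA m t * BB m t * PP (m+2) t
    / (2 * DD m t * (t + m + 1)^7 * (t + m + 2)^7)

def WW (m : ℕ) (t : ℝ) : ℝ :=
  AA m t * BB m t / (DD m t * (t + m + 1)^7 * (t + m + 2)^7 * (t + m + 3)^7)

lemma RR0 (m : ℕ) (t : ℝ) (ht : 0 < t) :
    RR m t = WW m t * ((t + m/2) * (t + m + 1)^7 * (t + m + 2)^7 * (t + m + 3)^7) := by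
  have hD := (DD_pos m t ht).ne'
  have h1 : t + m + 1 ≠ 0 := by positivity
  have h2 : t + m + 2 ≠ 0 := by positivity
  have h3 : t + m + 3 ≠ 0 := by positivity
  unfold RR WW
  field_simp

lemma RR1 (m : ℕ) (t : ℝ) (ht : 0 < t) :
    RR (m+1) t = WW m t * ((t + (m+1)/2) * (t - (m+1)) * (t + 2*m + 1) * (t + 2*m + 2)
      * (t + m + 2)^7 * (t + m + 3)^7) := by
  have hD := (DD_pos m t ht).ne'
  have h1 : t + m + 1 ≠ 0 := by positivity
  have h2 : t + m + 2 ≠ 0 := by positivity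
  have h3 : t + m + 3 ≠ 0 := by positivity
  unfold RR WW
  rw [AA_succ, BB_succ m t ht, DD_succ]
  push_cast
  field_simp

lemma RR2 (m : ℕ) (t : ℝ) (ht : 0 < t) :
    RR (m+2) t = WW m t * ((t + (m+2)/2) * (t - (m+1)) * (t - (m+2))
      * (t + 2*m + 1) * (t + 2*m + 2) * (t + 2*m + 3) * (t + 2*m + 4) * (t + m + 3)^7) := by
  have hD := (DD_pos m t ht).ne'
  have h1 : t + m + 1 ≠ 0 := by positivity
  have h2 : t + m + 2 ≠ 0 := by positivity
  have h3 : t + m + 3 ≠ 0 := by positivity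
  have e1 : t + ((m:ℝ) + 1) + 1 = t + m + 2 := by ring
  have e2 : t + 2 * ((m:ℝ) + 1) + 1 = t + 2*m + 3 := by ring
  have e3 : t + 2 * ((m:ℝ) + 1) + 2 = t + 2*m + 4 := by ring
  have e4 : (m:ℝ) + 1 + 1 = m + 2 := by ring
  unfold RR WW
  rw [AA_succ (m+1), BB_succ (m+1) t ht, DD_succ (m+1), AA_succ, BB_succ m t ht, DD_succ]
  push_cast
  rw [e1, e2, e3, e4]
  field_simp

lemma RR3 (m : ℕ) (t : ℝ) (ht : 0 < t) :
    RR (m+3) t = WW m t * ((t + (m+3)/2) * (t - (m+1)) * (t - (m+2)) * (t - (m+3))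
      * (t + 2*m + 1) * (t + 2*m + 2) * (t + 2*m + 3) * (t + 2*m + 4)
      * (t + 2*m + 5) * (t + 2*m + 6)) := by
  have hD := (DD_pos m t ht).ne'
  have h1 : t + m + 1 ≠ 0 := by positivity
  have h2 : t + m + 2 ≠ 0 := by positivity
  have h3 : t + m + 3 ≠ 0 := by positivity
  have e1 : t + ((m:ℝ) + 1) + 1 = t + m + 2 := by ring
  have e2 : t + 2 * ((m:ℝ) + 1) + 1 = t + 2*m + 3 := by ring
  have e3 : t + 2 * ((m:ℝ) + 1) + 2 = t + 2*m + 4 := by ring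
  have e4 : (m:ℝ) + 1 + 1 = m + 2 := by ring
  have e5 : t + ((m:ℝ) + 2) + 1 = t + m + 3 := by ring
  have e6 : t + 2 * ((m:ℝ) + 2) + 1 = t + 2*m + 5 := by ring
  have e7 : t + 2 * ((m:ℝ) + 2) + 2 = t + 2*m + 6 := by ring
  have e8 : (m:ℝ) + 2 + 1 = m + 3 := by ring
  unfold RR WW
  rw [AA_succ (m+2), BB_succ (m+2) t ht, DD_succ (m+2), AA_succ (m+1), BB_succ (m+1) t ht,
    DD_succ (m+1), AA_succ, BB_succ m t ht, DD_succ]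
  push_cast
  rw [e1, e2, e3, e4, e5, e6, e7, e8]
  field_simp

lemma SS0 (m : ℕ) (t : ℝ) (ht : 0 < t) :
    SS m t = WW m t * ((t - (m+1)) * (t + m + 3)^7 * PP (m+2) t / 2) := by
  have hD := (DD_pos m t ht).ne'
  have h1 : t + m + 1 ≠ 0 := by positivity
  have h2 : t + m + 2 ≠ 0 := by positivity
  have h3 : t + m + 3 ≠ 0 := by positivity
  unfold SS WW
  field_simp

lemma SS1 (m : ℕ) (t : ℝ) (ht : 0 < t) :
    SS m (t+1) = WW m t * (t^7 * (t + 2*m + 1) * PP (m+2) (t+1) / 2) := by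
  have hD := (DD_pos m t ht).ne'
  have h1 : t + m + 1 ≠ 0 := by positivity
  have h2 : t + m + 2 ≠ 0 := by positivity
  have h3 : t + m + 3 ≠ 0 := by positivity
  have e1 : t + 1 + (m:ℝ) + 1 = t + m + 2 := by ring
  have e2 : t + 1 + (m:ℝ) + 2 = t + m + 3 := by ring
  have e3 : (t + 1 - ((m:ℝ) + 1)) * AA m (t+1) = t * AA m t := by
    rw [← AA_shift]
    ring
  unfold SS WW
  rw [e1, e2, e3, BB_shift m t ht, DD_shift m t ht]
  field_simp

set_option maxHeartbeats 0 in
set_option maxRecDepth 100000 in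
lemma big (y t : ℝ) :
    y*(y+1)^5 * b0r (y-1) * ((y+1)*y)^4 * (2*t + y + 1) * (t-(y-1)) * (t-y) * (t-(y+1))
        * (t+2*y-3)*(t+2*y-2)*(t+2*y-1)*(t+2*y)*(t+2*y+1)*(t+2*y+2)
      - 2*y*b1r y * y^4 * (2*t + y) * (t-(y-1)) * (t-y)
        * (t+2*y-3)*(t+2*y-2)*(t+2*y-1)*(t+2*y) * (t+y+1)^7
      - b2r y * (2*t + y - 1) * (t-(y-1)) * (t+2*y-3)*(t+2*y-2) * (t+y)^7 * (t+y+1)^7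
      + 2*(y-1)*(2*y-1)*b0r y * (2*t + y - 2) * (t+y-1)^7 * (t+y)^7 * (t+y+1)^7
    = t^7 * (t+2*y-3) * PP y (t+1) - (t-(y-1)) * (t+y+1)^7 * PP y t := by
  unfold b0r b1r b2r a0r a1r a2r PP cf0 cf1 cf2 cf3 cf4 cf5 cf6 cf7 cf8 cf9 cf10 cf11 cf12 cf13 cf14 cf15
  ring

lemma key (m : ℕ) (y t : ℝ) (hy : y = m + 2) (ht : 0 < t) :
    y*(y+1)^5 * b0r (y-1) * ((y+1)*y*(y-1))^4 * RR (m+3) t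
      - 2*y*b1r y * (y*(y-1))^4 * RR (m+2) t
      - b2r y * (y-1)^4 * RR (m+1) t
      + 2*(y-1)^5*(2*y-1)*b0r y * RR m t = (y-1)^4 * (SS m (t+1) - SS m t) := by
  rw [RR0 m t ht, RR1 m t ht, RR2 m t ht, RR3 m t ht, SS0 m t ht, SS1 m t ht]
  have hm : (m:ℝ) = y - 2 := by rw [hy]; ring
  have hb := big y t
  have q1 : (m:ℝ) + 2 = y := by rw [hm]; ring
  rw [q1, hm]
  generalize b0r (y-1) = u0 at *
  generalize b0r y = u1 at *
  generalize b1r y = u2 at *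
  generalize b2r y = u3 at *
  generalize PP y t = u4 at *
  generalize PP y (t+1) = u5 at *
  generalize WW m t = w at *
  have e1 : t + (y-2) + 1 = t+y-1 := by ring
  have e2 : t + (y-2) + 2 = t+y := by ring
  have e3 : t + (y-2) + 3 = t+y+1 := by ring
  have f1 : t + 2*(y-2) + 1 = t+2*y-3 := by ring
  have f2 : t + 2*(y-2) + 2 = t+2*y-2 := by ring
  have f3 : t + 2*(y-2) + 3 = t+2*y-1 := by ring
  have f4 : t + 2*(y-2) + 4 = t+2*y := by ring
  have f5 : t + 2*(y-2) + 5 = t+2*y+1 := by ring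
  have f6 : t + 2*(y-2) + 6 = t+2*y+2 := by ring
  have g1 : y - 2 + 1 = y - 1 := by ring
  have g3 : y - 2 + 3 = y + 1 := by ring
  rw [e1, e2, e3, f1, f2, f3, f4, f5, f6, g1, g3]
  generalize ha1 : (t+y-1)^7 = p1 at *
  generalize ha2 : (t+y)^7 = p2 at *
  generalize ha3 : (t+y+1)^7 = p3 at *
  generalize t+2*y-3 = s1 at *
  generalize t+2*y-2 = s2 at *
  generalize t+2*y-1 = s3 at *
  generalize t+2*y = s4 at *
  generalize t+2*y+1 = s5 at *
  generalize t+2*y+2 = s6 at *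
  generalize hv : y - 1 = v at *
  generalize t-(y+1) = r3 at *
  generalize t-y = r2 at *
  generalize t-v = r1 at *
  linear_combination (w * v^4/2) * hb + (v^4 * w * r1 * s1 * s2 * p3 * u3 * p2 / 2) * hv

/-- Polynomial growth of degree at most `d` on `[1, ∞)`. -/
def Bd (d : ℕ) (f : ℝ → ℝ) : Prop := ∃ C, 0 ≤ C ∧ ∀ t, 1 ≤ t → |f t| ≤ C * t^d

lemma Bd.base (c : ℝ) : Bd 0 (fun _ => c) := ⟨|c|, abs_nonneg _, fun t _ => by simp⟩

lemma Bd.step {d : ℕ} {f : ℝ → ℝ} (c : ℝ) (h : Bd d f) : Bd (d+1) (fun t => c + t * f t) := by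
  obtain ⟨C, hC, h⟩ := h
  refine ⟨|c| + C, by positivity, fun t ht => ?_⟩
  have h1 : |c + t * f t| ≤ |c| + t * |f t| := by
    refine (abs_add_le _ _).trans ?_
    rw [abs_mul, abs_of_nonneg (by linarith : 0 ≤ t)]
  have h2 : t * |f t| ≤ t * (C * t^d) := mul_le_mul_of_nonneg_left (h t ht) (by linarith)
  have h3 : |c| * 1 ≤ |c| * t^(d+1) :=
    mul_le_mul_of_nonneg_left (one_le_pow₀ ht) (abs_nonneg _)
  calc |c + t * f t| ≤ |c| * t^(d+1) + t * (C * t^d) := by linarith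
    _ = (|c| + C) * t^(d+1) := by ring

lemma PP_bd (y : ℝ) : Bd 15 (PP y) := by
  unfold PP
  exact (Bd.step (cf0 y) (Bd.step (cf1 y) (Bd.step (cf2 y) (Bd.step (cf3 y) (Bd.step (cf4 y) (Bd.step (cf5 y) (Bd.step (cf6 y) (Bd.step (cf7 y) (Bd.step (cf8 y) (Bd.step (cf9 y) (Bd.step (cf10 y) (Bd.step (cf11 y) (Bd.step (cf12 y) (Bd.step (cf13 y) (Bd.step (cf14 y) (Bd.base (cf15 y)))))))))))))))))

lemma AB_bound (m : ℕ) (t : ℝ) (ht : 1 ≤ t) :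
    |AA m t * BB m t / DD m t| ≤ ((m:ℝ)+1)^m / t^6 := by
  have h0 : 0 < t := by linarith
  set Q := ∏ j ∈ Finset.Icc 1 m, (t + (j:ℝ)) with hQ
  have hQ1 : 1 ≤ Q := by
    have h1 : ∏ j ∈ Finset.Icc 1 m, (1:ℝ) ≤ Q := by
      apply Finset.prod_le_prod
      · intros; norm_num
      · intro i _
        have : (0:ℝ) ≤ i := Nat.cast_nonneg _
        linarith
    simpa using h1
  have hA : |AA m t| ≤ Q := by
    unfold AA
    rw [Finset.abs_prod]
    apply Finset.prod_le_prod
    · intros; positivity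
    · intro i _
      have : (0:ℝ) ≤ i := Nat.cast_nonneg _
      rw [abs_le]; constructor <;> linarith
  have hB : |BB m t| ≤ ((m:ℝ)+1)^m * Q := by
    unfold BB
    rw [Finset.abs_prod]
    have : ((m:ℝ)+1)^m * Q = ∏ j ∈ Finset.Icc 1 m, (((m:ℝ)+1) * (t + (j:ℝ))) := by
      rw [Finset.prod_mul_distrib, Finset.prod_const]
      simp [hQ]
    rw [this]
    apply Finset.prod_le_prod
    · intros; positivity
    · intro i _
      have hi : (0:ℝ) ≤ i := Nat.cast_nonneg _
      have hm : (0:ℝ) ≤ m := Nat.cast_nonneg _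
      rw [abs_of_nonneg (by positivity)]
      nlinarith [mul_nonneg hm hi, mul_nonneg hm (sub_nonneg.2 ht)]
  have hD : DD m t = t^6 * Q^6 := by
    unfold DD
    rw [Finset.prod_range_succ', hQ, icc_prod, ← Finset.prod_pow]
    simp [mul_comm]
  rw [abs_div, abs_mul, hD, abs_of_pos (by positivity : 0 < t^6 * Q^6),
    div_le_div_iff₀ (by positivity) (by positivity)]
  have h1 : |AA m t| * |BB m t| ≤ Q * (((m:ℝ)+1)^m * Q) := by gcongr
  have h2 : Q^2 ≤ Q^6 := pow_le_pow_right₀ hQ1 (by norm_num)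
  calc |AA m t| * |BB m t| * t^6 ≤ (Q * (((m:ℝ)+1)^m * Q)) * t^6 := by gcongr
    _ = ((m:ℝ)+1)^m * t^6 * Q^2 := by ring
    _ ≤ ((m:ℝ)+1)^m * t^6 * Q^6 := by gcongr
    _ = _ := by ring

lemma RR_bound (m : ℕ) (t : ℝ) (ht : 1 ≤ t) :
    |RR m t| ≤ ((m:ℝ)+1)^(m+1) / t^2 := by
  have h0 : 0 < t := by linarith
  have hm : (0:ℝ) ≤ m := Nat.cast_nonneg _
  have h := AB_bound m t ht
  have e : RR m t = (t + (m:ℝ)/2) * (AA m t * BB m t / DD m t) := by unfold RR; ring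
  rw [e, abs_mul, abs_of_nonneg (by positivity)]
  have h1 : t + (m:ℝ)/2 ≤ (m+1) * t := by nlinarith
  calc (t + (m:ℝ)/2) * |AA m t * BB m t / DD m t|
      ≤ ((m+1) * t) * (((m:ℝ)+1)^m / t^6) := by gcongr
    _ = ((m:ℝ)+1)^(m+1) / t^5 := by
      field_simp
      ring
    _ ≤ ((m:ℝ)+1)^(m+1) / t^2 := by
      gcongr
      norm_num

lemma RR_summable (m : ℕ) : Summable (fun k : ℕ => RR m ((k:ℝ)+1)) := by
  have h := (summable_nat_add_iff 1).2 (Real.summable_one_div_nat_pow.2 (by norm_num : 1 < 2))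
  refine Summable.of_norm_bounded (h.mul_left (((m:ℝ)+1)^(m+1))) (fun k => ?_)
  have := RR_bound m ((k:ℝ)+1) (by have : (0:ℝ) ≤ k := Nat.cast_nonneg _
                                   linarith)
  rw [Real.norm_eq_abs]
  push_cast
  rw [mul_one_div]
  exact this

lemma SS_bound (m : ℕ) : ∃ C, ∀ t, 1 ≤ t → |SS m t| ≤ C / t := by
  obtain ⟨C, hC, hP⟩ := PP_bd ((m:ℝ)+2)
  refine ⟨(m+1) * (((m:ℝ)+1)^m) * C, fun t ht => ?_⟩
  have h0 : 0 < t := by linarith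
  have hm : (0:ℝ) ≤ m := Nat.cast_nonneg _
  have h := AB_bound m t ht
  have e : SS m t = (t - (m+1)) * (AA m t * BB m t / DD m t) * PP (m+2) t
      / (2 * (t+m+1)^7 * (t+m+2)^7) := by
    have hD := (DD_pos m t h0).ne'
    unfold SS
    field_simp
  have h1 : |t - ((m:ℝ)+1)| ≤ (m+1) * t := by
    rw [abs_le]; constructor <;> nlinarith
  have h2 : t^7 * t^7 ≤ 2 * (t+m+1)^7 * (t+m+2)^7 := by
    have a1 : t^7 ≤ (t+m+1)^7 := by gcongr; linarith
    have a2 : t^7 ≤ (t+m+2)^7 := by gcongr; linarith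
    have a3 : t^7 * t^7 ≤ (t+m+1)^7 * (t+m+2)^7 := by gcongr
    have a4 : 0 ≤ (t+m+1)^7 * (t+m+2)^7 := by positivity
    linarith
  rw [e, abs_div, abs_mul, abs_mul,
    abs_of_pos (by positivity : 0 < 2 * (t+m+1)^7 * (t+m+2)^7)]
  calc |t - ((m:ℝ)+1)| * |AA m t * BB m t / DD m t| * |PP (m+2) t|
        / (2 * (t+m+1)^7 * (t+m+2)^7)
      ≤ ((m+1) * t) * (((m:ℝ)+1)^m / t^6) * (C * t^15) / (t^7 * t^7) := by
        gcongr
        exact hP t ht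
    _ = (m+1) * (((m:ℝ)+1)^m) * C * t^16 / t^20 := by field_simp
    _ ≤ (m+1) * (((m:ℝ)+1)^m) * C / t := by
      rw [div_le_div_iff₀ (by positivity) h0]
      have : t^16 * t ≤ t^20 := by
        rw [← pow_succ]
        exact pow_le_pow_right₀ ht (by norm_num)
      have hc : 0 ≤ (m+1) * (((m:ℝ)+1)^m) * C := by positivity
      calc (m+1) * (((m:ℝ)+1)^m) * C * t^16 * t = (m+1) * (((m:ℝ)+1)^m) * C * (t^16 * t) := by ring
        _ ≤ _ := mul_le_mul_of_nonneg_left this hc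

lemma SS_tendsto (m : ℕ) : Tendsto (fun k : ℕ => SS m ((k:ℝ)+1)) atTop (nhds 0) := by
  obtain ⟨C, hC⟩ := SS_bound m
  have h1 : Tendsto (fun k : ℕ => C * (1 / ((k:ℝ)+1))) atTop (nhds 0) := by
    simpa using (tendsto_one_div_add_atTop_nhds_zero_nat (𝕜 := ℝ)).const_mul C
  refine squeeze_zero_norm (fun k => ?_) h1
  rw [Real.norm_eq_abs, mul_one_div]
  exact hC _ (by have : (0:ℝ) ≤ k := Nat.cast_nonneg _
                 linarith)

lemma SS_one (m : ℕ) : SS m 1 = 0 := by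
  have h : (1 - ((m:ℝ)+1)) * AA m 1 = 0 := by
    have := AA_shift m 0
    simp only [zero_add, zero_mul] at this
    linear_combination this
  unfold SS
  rw [h]
  simp

lemma SS_hasSum (m : ℕ) (g : ℕ → ℝ) (hg : Summable g) (c : ℝ)
    (h : ∀ k : ℕ, g k = c * (SS m ((k:ℝ)+1+1) - SS m ((k:ℝ)+1))) : ∑' k, g k = 0 := by
  have h1 := hg.hasSum.tendsto_sum_nat
  have h2 : ∀ K : ℕ, ∑ k ∈ Finset.range K, g k = c * SS m ((K:ℝ)+1) := by
    intro K
    induction K with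
    | zero => simp [SS_one]
    | succ K ih =>
      rw [Finset.sum_range_succ, ih, h]
      push_cast
      ring
  simp only [h2] at h1
  have h3 := (SS_tendsto m).const_mul c
  rw [mul_zero] at h3
  exact tendsto_nhds_unique h1 h3

/-- The sequence `{r_n}` satisfies the difference equation (8) for every integer `n ≥ 2`. -/
theorem stmt8 :
    ∀ n : ℕ, 2 ≤ n →
      (n : ℝ)*((n : ℝ) + 1)^5 * b0r ((n : ℝ) - 1) * rr (n+1) - 2*(n : ℝ)*b1r (n : ℝ) * rr n
        - b2r (n : ℝ) * rr (n-1)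
        + 2*((n : ℝ) - 1)^5*(2*(n : ℝ) - 1)*b0r (n : ℝ) * rr (n-2) = 0 := by
  intro n hn
  obtain ⟨m, rfl⟩ : ∃ m, n = m + 2 := ⟨n - 2, by omega⟩
  have i1 : m + 2 + 1 = m + 3 := rfl
  have i2 : m + 2 - 1 = m + 1 := rfl
  have i3 : m + 2 - 2 = m := rfl
  rw [i1, i2, i3]
  generalize hy : ((m + 2 : ℕ) : ℝ) = y
  have hy' : y = m + 2 := by rw [← hy]; push_cast; ring
  simp only [rr_eq]
  have s0 := RR_summable m
  have s1 := RR_summable (m+1)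
  have s2 := RR_summable (m+2)
  have s3 := RR_summable (m+3)
  have f1 : ((m+1).factorial : ℝ) = (y-1) * m.factorial := by
    rw [Nat.factorial_succ, hy']; push_cast; ring
  have f2 : ((m+2).factorial : ℝ) = y * ((y-1) * m.factorial) := by
    rw [Nat.factorial_succ, Nat.cast_mul, f1, hy']; push_cast; ring
  have f3 : ((m+3).factorial : ℝ) = (y+1) * (y * ((y-1) * m.factorial)) := by
    rw [Nat.factorial_succ, Nat.cast_mul, f2, hy']; push_cast; ring
  rw [f1, f2, f3]
  have hs := (((s3.mul_left (y*(y+1)^5 * b0r (y-1) * ((y+1)*y*(y-1))^4)).sub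
    (s2.mul_left (2*y*b1r y * (y*(y-1))^4))).sub
    (s1.mul_left (b2r y * (y-1)^4))).add (s0.mul_left (2*(y-1)^5*(2*y-1)*b0r y))
  have hz := SS_hasSum m _ hs ((y-1)^4) (fun k => key m y ((k:ℝ)+1) hy' (by positivity))
  rw [Summable.tsum_add
    (((s3.mul_left (y*(y+1)^5 * b0r (y-1) * ((y+1)*y*(y-1))^4)).sub
    (s2.mul_left (2*y*b1r y * (y*(y-1))^4))).sub
    (s1.mul_left (b2r y * (y-1)^4))) (s0.mul_left (2*(y-1)^5*(2*y-1)*b0r y)),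
    Summable.tsum_sub ((s3.mul_left (y*(y+1)^5 * b0r (y-1) * ((y+1)*y*(y-1))^4)).sub
    (s2.mul_left (2*y*b1r y * (y*(y-1))^4))) (s1.mul_left (b2r y * (y-1)^4)),
    Summable.tsum_sub (s3.mul_left (y*(y+1)^5 * b0r (y-1) * ((y+1)*y*(y-1))^4))
    (s2.mul_left (2*y*b1r y * (y*(y-1))^4)),
    tsum_mul_left, tsum_mul_left, tsum_mul_left, tsum_mul_left] at hz
  generalize b0r (y-1) = u0 at *
  generalize b0r y = u1 at *
  generalize b1r y = u2 at *
  generalize b2r y = u3 at *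
  linear_combination ((m.factorial : ℝ)^4) * hz
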